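/- arXiv:1801.08871 — 3 statements merged into one kernel-verified Lean document; each statement's English description precedes it below -/
import Mathlib

section
/- For every integer n ≥ 1, the complete graph K_{2n+1} on 2n+1 vertices satisfies 2n ≤ χ'^t_d(K_{2n+1}) ≤ 4n − 1. -/
/-!
Lower bound: the `2n` edges at a fixed vertex are pairwise adjacent, so they use distinct colors.

Upper bound: single out a vertex `v`. The `2n` edges at `v` receive `2n` private colors, and the
remaining `K_{2n}` is properly edge-colored with `2n - 1` further colors by the classical
one-factorization. This is total dominating: an edge `ab` avoiding `v` is adjacent to the single
edge `va` of its color class, and an edge `va` is adjacent to another edge `vb`, which exists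
because `v` has degree `2n ≥ 2`.
-/

open SimpleGraph

/-- Two edges of a simple graph are adjacent if they are distinct and share an endpoint. -/
def edgeAdj {V : Type*} (e f : Sym2 V) : Prop :=
  e ≠ f ∧ ∃ v, v ∈ e ∧ v ∈ f

/-- `c` is a total dominator edge coloring of `G` using colors from `{0, …, n-1}`:
a proper edge coloring such that every edge is adjacent to every edge of some
nonempty color class. -/
def IsTDEColoring {V : Type*} (G : SimpleGraph V) (n : ℕ) (c : Sym2 V → ℕ) : Prop :=
  (∀ e ∈ G.edgeSet, c e < n) ∧
  (∀ e ∈ G.edgeSet, ∀ f ∈ G.edgeSet, edgeAdj e f → c e ≠ c f) ∧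
  (∀ e ∈ G.edgeSet, ∃ i, (∃ f ∈ G.edgeSet, c f = i) ∧
      ∀ f ∈ G.edgeSet, c f = i → edgeAdj e f)

/-- The total dominator edge chromatic number of `G`: the minimum number of colors
in a total dominator edge coloring of `G`. -/
noncomputable def tdec {V : Type*} (G : SimpleGraph V) : ℕ :=
  sInf {n | ∃ c : Sym2 V → ℕ, IsTDEColoring G n c}

/-- The coloring of `K_{2n+1}` on the vertices `0, …, 2n`, as a function of the two endpoints.
The vertex `2n` is the center of the star with private colors `2n-1, …, 4n-2`. On the other
vertices this is the one-factorization with `2n-1` playing the role of the point at infinity: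
`{a, b}` gets `a + b` and `{a, ∞}` gets `2a`, modulo `2n-1`. As all sums are below `2(2n-1)`, the
residue is written with a single conditional subtraction, so everything stays linear. -/
def oddCol (n a b : ℕ) : ℕ :=
  if a = 2 * n then 2 * n - 1 + b
  else if b = 2 * n then 2 * n - 1 + a
  else if a = 2 * n - 1 then (if 2 * b < 2 * n - 1 then 2 * b else 2 * b - (2 * n - 1))
  else if b = 2 * n - 1 then (if 2 * a < 2 * n - 1 then 2 * a else 2 * a - (2 * n - 1))
  else if a + b < 2 * n - 1 then a + b else a + b - (2 * n - 1)

lemma oddCol_comm (n a b : ℕ) : oddCol n a b = oddCol n b a := by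
  unfold oddCol; split_ifs <;> omega

lemma oddCol_lt {n a b : ℕ} (ha : a ≤ 2 * n) (hb : b ≤ 2 * n) (hab : a ≠ b) :
    oddCol n a b < 4 * n - 1 := by
  unfold oddCol; split_ifs <;> omega

lemma oddCol_proper {n a b c : ℕ} (ha : a ≤ 2 * n) (hb : b ≤ 2 * n) (hc : c ≤ 2 * n)
    (hab : a ≠ b) (hac : a ≠ c) (h : oddCol n a b = oddCol n a c) : b = c := by
  unfold oddCol at h; split_ifs at h <;> omega

/-- The color of the star edge `{2n, x}` occurs on no other edge. -/
lemma oddCol_star {n a b x : ℕ} (ha : a ≤ 2 * n) (hb : b ≤ 2 * n)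
    (hab : a ≠ b) (h : oddCol n a b = 2 * n - 1 + x) :
    (a = 2 * n ∧ b = x) ∨ (b = 2 * n ∧ a = x) := by
  unfold oddCol at h; split_ifs at h <;> omega

/-- `oddCol` as a function on unordered pairs. -/
def oddColoring (n : ℕ) : Sym2 (Fin (2 * n + 1)) → ℕ :=
  Sym2.lift ⟨fun a b => oddCol n a b, fun a b => oddCol_comm n a b⟩

@[simp] lemma oddColoring_mk (n : ℕ) (a b : Fin (2 * n + 1)) :
    oddColoring n s(a, b) = oddCol n a b := rfl

/-- An edge meeting the star edge `{2n, x}`, and different from it, dominates the color class of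
that star edge. -/
lemma oddColoring_dominates {n : ℕ} (e : Sym2 (Fin (2 * n + 1))) (x : Fin (2 * n + 1))
    (hx : x ≠ Fin.last (2 * n)) (h : edgeAdj e s(Fin.last (2 * n), x)) :
    ∃ i, (∃ f ∈ (⊤ : SimpleGraph (Fin (2 * n + 1))).edgeSet, oddColoring n f = i) ∧
      ∀ f ∈ (⊤ : SimpleGraph (Fin (2 * n + 1))).edgeSet, oddColoring n f = i → edgeAdj e f := by
  refine ⟨2 * n - 1 + x, ⟨s(Fin.last (2 * n), x), ?_, by simp [oddCol]⟩, ?_⟩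
  · simpa using hx.symm
  · intro f
    induction f using Sym2.ind with | _ a b
    intro hf hc
    have hab : a ≠ b := by simpa using hf
    suffices s(a, b) = s(Fin.last (2 * n), x) by rwa [this]
    rcases oddCol_star (by omega) (by omega) (fun h => hab (Fin.ext h)) hc with ⟨h1, h2⟩ | ⟨h1, h2⟩
    · rw [show a = Fin.last (2 * n) from Fin.ext h1, show b = x from Fin.ext h2]
    · rw [show b = Fin.last (2 * n) from Fin.ext h1, show a = x from Fin.ext h2, Sym2.eq_swap]

lemma isTDEColoring_oddColoring {n : ℕ} (hn : 1 ≤ n) :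
    IsTDEColoring (⊤ : SimpleGraph (Fin (2 * n + 1))) (4 * n - 1) (oddColoring n) := by
  refine ⟨?_, ?_, ?_⟩
  · intro e
    induction e using Sym2.ind with | _ a b
    intro he
    have hab : a ≠ b := by simpa using he
    exact oddCol_lt (by omega) (by omega) (fun h => hab (Fin.ext h))
  · rintro e he f hf ⟨hne, v, hve, hvf⟩ hc
    obtain ⟨a, rfl⟩ := Sym2.mem_iff_exists.1 hve
    obtain ⟨b, rfl⟩ := Sym2.mem_iff_exists.1 hvf
    have hva : v ≠ a := by simpa using he
    have hvb : v ≠ b := by simpa using hf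
    have hab : a = b := Fin.ext <| oddCol_proper (by omega) (by omega) (by omega)
      (fun h => hva (Fin.ext h)) (fun h => hvb (Fin.ext h)) hc
    exact hne (by rw [hab])
  · intro e he
    by_cases hl : Fin.last (2 * n) ∈ e
    · obtain ⟨a, rfl⟩ := Sym2.mem_iff_exists.1 hl
      have ha : Fin.last (2 * n) ≠ a := by simpa using he
      -- another neighbor of the center exists as its degree is `2n ≥ 2`
      obtain ⟨x, hxl, hxa⟩ : ∃ x : Fin (2 * n + 1), x ≠ Fin.last (2 * n) ∧ x ≠ a := by
        by_cases h0 : (a : ℕ) = 0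
        · exact ⟨⟨1, by omega⟩, by simp [Fin.ext_iff]; omega, by simp [Fin.ext_iff]; omega⟩
        · exact ⟨⟨0, by omega⟩, by simp [Fin.ext_iff]; omega, by simp [Fin.ext_iff]; omega⟩
      refine oddColoring_dominates _ x hxl ⟨?_, Fin.last (2 * n), by simp, by simp⟩
      intro h
      exact hxa (Sym2.congr_right.1 h).symm
    · induction e using Sym2.ind with | _ a b
      have ha : a ≠ Fin.last (2 * n) := fun h => hl (by simp [h])
      refine oddColoring_dominates _ a ha ⟨?_, a, by simp, by simp⟩
      intro h
      exact hl (by rw [h]; simp)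

lemma le_of_isTDEColoring {n k : ℕ} {c : Sym2 (Fin (2 * n + 1)) → ℕ}
    (h : IsTDEColoring (⊤ : SimpleGraph (Fin (2 * n + 1))) k c) : 2 * n ≤ k := by
  obtain ⟨hlt, hp, -⟩ := h
  have hmem (i : Fin (2 * n)) :
      s(0, i.succ) ∈ (⊤ : SimpleGraph (Fin (2 * n + 1))).edgeSet := by
    simpa using (Fin.succ_ne_zero i).symm
  have := Fintype.card_le_of_injective
    (fun i : Fin (2 * n) => (⟨c s(0, i.succ), hlt _ (hmem i)⟩ : Fin k)) (by
      intro i j hij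
      by_contra hne
      refine hp _ (hmem i) _ (hmem j) ⟨?_, 0, by simp, by simp⟩ (Fin.ext_iff.1 hij)
      intro h
      exact hne (Fin.succ_injective _ (Sym2.congr_right.1 h)))
  simpa using this

/-- For n ≥ 1, the complete graph K_{2n+1} satisfies 2n ≤ χ'ᵗ_d(K_{2n+1}) ≤ 4n−1. -/
theorem tdec_completeGraph_odd (n : ℕ) (hn : 1 ≤ n) :
    2 * n ≤ tdec (⊤ : SimpleGraph (Fin (2 * n + 1))) ∧
    tdec (⊤ : SimpleGraph (Fin (2 * n + 1))) ≤ 4 * n - 1 := by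
  have hmem : 4 * n - 1 ∈ {k | ∃ c : Sym2 (Fin (2 * n + 1)) → ℕ,
      IsTDEColoring (⊤ : SimpleGraph (Fin (2 * n + 1))) k c} :=
    ⟨_, isTDEColoring_oddColoring hn⟩
  refine ⟨?_, Nat.sInf_le hmem⟩
  -- the infimum is attained, the set being nonempty (`sInf ∅` would be `0`)
  obtain ⟨c, hc⟩ := Nat.sInf_mem ⟨_, hmem⟩
  exact le_of_isTDEColoring hc
end

section
/- For every integer n ≥ 2, the friendship graph F_n satisfies χ'^t_d(F_n) = 2n. -/
/-!
The `2n` edges at the hub ("spokes") are pairwise adjacent, so a proper edge coloring needs at least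
`2n` colors. Conversely, give the spoke to the vertex `(i, k)` the color `2i + k`, and reuse
even colors for the edges opposite the hub ("rims"): color `0` for every triangle except the `0`-th,
whose rim gets color `2`, the color of a spoke of triangle `1` (this uses `n ≥ 2`).
A rim never shares a color with a spoke of its own triangle, so the coloring is proper, and the class
of each odd color `2j + 1` is the single spoke to `(j, 1)`. The rim of triangle `j` and every other
spoke are adjacent to that spoke, which gives the domination condition.
-/

open SimpleGraph

/-- The friendship graph Fₙ: the join of a single hub vertex with `n` disjoint
copies of `K₂`, i.e. `n` triangles sharing exactly one common vertex. -/
def friendshipGraph (n : ℕ) : SimpleGraph (Unit ⊕ Fin n × Fin 2) :=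
  SimpleGraph.fromRel (fun x y =>
    match x, y with
    | .inl _, .inr _ => True
    | .inr (i, _), .inr (j, _) => i = j
    | _, _ => False)


/-- The edge from the hub to the outer vertex `p`. -/
def spoke {n : ℕ} (p : Fin n × Fin 2) : Sym2 (Unit ⊕ Fin n × Fin 2) :=
  s(.inl (), .inr p)

/-- The edge of the `i`-th triangle opposite the hub. -/
def rim {n : ℕ} (i : Fin n) : Sym2 (Unit ⊕ Fin n × Fin 2) :=
  s(.inr (i, 0), .inr (i, 1))

lemma mem_edgeSet_friendshipGraph {n : ℕ} {e : Sym2 (Unit ⊕ Fin n × Fin 2)} :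
    e ∈ (friendshipGraph n).edgeSet ↔ (∃ p, e = spoke p) ∨ ∃ i, e = rim i := by
  constructor
  · induction e with | _ x y =>
    rw [SimpleGraph.mem_edgeSet, friendshipGraph, SimpleGraph.fromRel_adj]
    rcases x with ⟨⟩ | ⟨i, k⟩ <;> rcases y with ⟨⟩ | ⟨j, l⟩
    · simp
    · intro _
      exact .inl ⟨_, rfl⟩
    · intro _
      exact .inl ⟨_, Sym2.eq_swap⟩
    · rintro ⟨hne, h⟩
      have hij : i = j := h.elim id Eq.symm
      subst hij
      refine .inr ⟨i, ?_⟩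
      fin_cases k <;> fin_cases l <;> simp_all [rim, Sym2.eq_swap]
  · rintro (⟨p, rfl⟩ | ⟨i, rfl⟩)
    · simp [spoke, friendshipGraph]
    · simp [rim, friendshipGraph]

lemma spoke_mem {n : ℕ} (p : Fin n × Fin 2) : spoke p ∈ (friendshipGraph n).edgeSet :=
  mem_edgeSet_friendshipGraph.2 (.inl ⟨p, rfl⟩)

lemma spoke_injective {n : ℕ} : Function.Injective (spoke (n := n)) := by
  intro p q h
  simpa [spoke] using h

lemma edgeAdj_spoke_spoke {n : ℕ} {p q : Fin n × Fin 2} (h : p ≠ q) :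
    edgeAdj (spoke p) (spoke q) :=
  ⟨spoke_injective.ne h, .inl (), by simp [spoke], by simp [spoke]⟩

lemma edgeAdj_rim_spoke {n : ℕ} {i : Fin n} {p : Fin n × Fin 2} :
    edgeAdj (rim i) (spoke p) ↔ i = p.1 := by
  obtain ⟨j, k⟩ := p
  constructor
  · rintro ⟨-, v, hv, hw⟩
    simp only [rim, spoke, Sym2.mem_iff] at hv hw
    aesop
  · rintro rfl
    refine ⟨by simp [rim, spoke], .inr (i, k), ?_, by simp [spoke]⟩
    fin_cases k <;> simp [rim]

lemma not_edgeAdj_rim_rim {n : ℕ} {i j : Fin n} : ¬ edgeAdj (rim i) (rim j) := by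
  rintro ⟨hne, v, hv, hw⟩
  simp only [rim, Sym2.mem_iff] at hv hw
  aesop

lemma edgeAdj_comm {V : Type*} {e f : Sym2 V} : edgeAdj e f ↔ edgeAdj f e := by
  simp only [edgeAdj, ne_comm, and_comm]

/-- The optimal coloring: `2i + k` on the spoke to `(i, k)`, and on rims `2` for the `0`-th
triangle and `0` for all others. -/
def friendColoring (n : ℕ) : Sym2 (Unit ⊕ Fin n × Fin 2) → ℕ :=
  Sym2.lift ⟨fun x y =>
    match x, y with
    | .inl _, .inl _ => 0
    | .inl _, .inr p => 2 * p.1.val + p.2.val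
    | .inr p, .inl _ => 2 * p.1.val + p.2.val
    | .inr p, .inr q => if p.1.val = 0 ∧ q.1.val = 0 then 2 else 0, by
    rintro (_ | _) (_ | _) <;> simp [and_comm]⟩

lemma friendColoring_spoke {n : ℕ} (p : Fin n × Fin 2) :
    friendColoring n (spoke p) = 2 * p.1.val + p.2.val := rfl

lemma friendColoring_rim {n : ℕ} (i : Fin n) :
    friendColoring n (rim i) = if i.val = 0 then 2 else 0 := by
  simp [friendColoring, rim]

lemma friendColoring_spoke_injective {n : ℕ} {p q : Fin n × Fin 2}
    (h : friendColoring n (spoke p) = friendColoring n (spoke q)) : p = q := by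
  rw [friendColoring_spoke, friendColoring_spoke] at h
  have := p.2.isLt
  have := q.2.isLt
  exact Prod.ext (Fin.ext (by omega)) (Fin.ext (by omega))

lemma friendColoring_rim_ne_spoke {n : ℕ} {i : Fin n} {p : Fin n × Fin 2} (h : i = p.1) :
    friendColoring n (rim i) ≠ friendColoring n (spoke p) := by
  rw [friendColoring_rim, friendColoring_spoke, h]
  have := p.2.isLt
  split_ifs <;> omega

/-- Odd colors are used on one edge only. -/
lemma eq_spoke_of_friendColoring_eq {n : ℕ} {j : Fin n} {f : Sym2 (Unit ⊕ Fin n × Fin 2)}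
    (hf : f ∈ (friendshipGraph n).edgeSet)
    (h : friendColoring n f = friendColoring n (spoke (j, 1))) : f = spoke (j, 1) := by
  rcases mem_edgeSet_friendshipGraph.1 hf with ⟨p, rfl⟩ | ⟨i, rfl⟩
  · rw [friendColoring_spoke_injective h]
  · rw [friendColoring_rim, friendColoring_spoke] at h
    simp only [Fin.val_one] at h
    split_ifs at h <;> omega

lemma isTDEColoring_friendColoring {n : ℕ} (hn : 2 ≤ n) :
    IsTDEColoring (friendshipGraph n) (2 * n) (friendColoring n) := by
  refine ⟨?_, ?_, ?_⟩
  · intro e he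
    rcases mem_edgeSet_friendshipGraph.1 he with ⟨p, rfl⟩ | ⟨i, rfl⟩
    · rw [friendColoring_spoke]
      have := p.1.isLt
      have := p.2.isLt
      omega
    · rw [friendColoring_rim]
      split_ifs <;> omega
  · intro e he f hf hef
    rcases mem_edgeSet_friendshipGraph.1 he with ⟨p, rfl⟩ | ⟨i, rfl⟩ <;>
      rcases mem_edgeSet_friendshipGraph.1 hf with ⟨q, rfl⟩ | ⟨j, rfl⟩
    · exact fun h => hef.1 (by rw [friendColoring_spoke_injective h])
    · exact (friendColoring_rim_ne_spoke (edgeAdj_rim_spoke.1 (edgeAdj_comm.1 hef))).symm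
    · exact friendColoring_rim_ne_spoke (edgeAdj_rim_spoke.1 hef)
    · exact absurd hef not_edgeAdj_rim_rim
  · intro e he
    suffices h : ∃ j : Fin n, edgeAdj e (spoke (j, 1)) by
      obtain ⟨j, hj⟩ := h
      refine ⟨_, ⟨_, spoke_mem (j, 1), rfl⟩, fun f hf hc => ?_⟩
      rwa [eq_spoke_of_friendColoring_eq hf hc]
    rcases mem_edgeSet_friendshipGraph.1 he with ⟨p, rfl⟩ | ⟨i, rfl⟩
    · haveI : Nontrivial (Fin n) := Fin.nontrivial_iff_two_le.2 hn
      obtain ⟨j, hj⟩ := exists_ne p.1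
      exact ⟨j, edgeAdj_spoke_spoke fun h => hj (by rw [h])⟩
    · exact ⟨i, edgeAdj_rim_spoke.2 rfl⟩

lemma two_mul_le_of_isTDEColoring {n m : ℕ} {c : Sym2 (Unit ⊕ Fin n × Fin 2) → ℕ}
    (hc : IsTDEColoring (friendshipGraph n) m c) : 2 * n ≤ m := by
  have hinj : Function.Injective
      (fun p : Fin n × Fin 2 => (⟨c (spoke p), hc.1 _ (spoke_mem p)⟩ : Fin m)) := by
    intro p q h
    by_contra hpq
    exact hc.2.1 _ (spoke_mem p) _ (spoke_mem q) (edgeAdj_spoke_spoke hpq) (Fin.mk.inj h)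
  simpa [mul_comm] using Fintype.card_le_of_injective _ hinj

/-- For n ≥ 2, the friendship graph Fₙ satisfies χ'ᵗ_d(Fₙ) = 2n. -/
theorem tdec_friendshipGraph (n : ℕ) (hn : 2 ≤ n) :
    tdec (friendshipGraph n) = 2 * n := by
  have hmem : 2 * n ∈ {m | ∃ c, IsTDEColoring (friendshipGraph n) m c} :=
    ⟨_, isTDEColoring_friendColoring hn⟩
  refine le_antisymm (Nat.sInf_le hmem) ?_
  obtain ⟨c, hc⟩ := Nat.sInf_mem ⟨_, hmem⟩
  exact two_mul_le_of_isTDEColoring hc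
end

section
/- Let G be a finite connected simple graph with m ≥ 1 edges and let k ≥ 2. Then χ'^t_d(P_{k+1}) ≤ χ'^t_d(G^{1/k}) ≤ m · χ'^t_d(P_{k+1}), where G^{1/k} is the k-subdivision of G and P_{k+1} is the path graph on k+1 vertices. -/
/-!
Upper bound: the paths replacing the `m` edges of `G` partition the edges of `G^{1/k}`, so coloring
them with `m` disjoint copies of an optimal palette of `P_{k+1}` works: every edge dominates a class
inside its own path (`subdivision_tde`).

Lower bound: restrict an optimal coloring of `G^{1/k}` to the path of one edge of `G`. The edges
adjacent to a non-end edge of this path lie on the path, so only an end edge may fail to dominate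
a class of the restriction, and then the class it dominated in `G^{1/k}` avoids the path entirely.
Its color is therefore free, and giving it to the neighbor of the end edge repairs the defect
without emptying another class (`exists_tde_of_spare`). The colors freed at the two ends differ,
because the end vertices are not adjacent when `k ≥ 2` (`path_tde_of_subdivision`).

`tdec` is an infimum in `ℕ`, with value `0` on the empty set, so both bounds also use that
TDE-colorings exist: `path_tde` provides one for the path, and `subdivision_tde` transfers it.
-/


open SimpleGraph

/-- The k-subdivision of `G`: each edge `e` of `G` (with chosen endpoints
`(Quot.out e.1).1` and `(Quot.out e.1).2`) is replaced by a path of length `k`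
through `k - 1` new internal vertices. For `k = 1` this is `G` itself. -/
noncomputable def subdivision {V : Type*} (G : SimpleGraph V) (k : ℕ) :
    SimpleGraph (V ⊕ (G.edgeSet × Fin (k - 1))) :=
  SimpleGraph.fromRel (fun x y =>
    match x, y with
    | .inl v, .inl w => k = 1 ∧ G.Adj v w
    | .inl v, .inr (e, i) =>
        (v = (Quot.out e.1).1 ∧ (i : ℕ) = 0) ∨
        (v = (Quot.out e.1).2 ∧ (i : ℕ) = k - 2)
    | .inr _, .inl _ => False
    | .inr (e, i), .inr (f, j) => e = f ∧ (j : ℕ) = (i : ℕ) + 1)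

/-! ### TDE-colorings and adjacency of edges -/

theorem tdec_le {V : Type*} {G : SimpleGraph V} {n : ℕ} {c : Sym2 V → ℕ}
    (h : IsTDEColoring G n c) : tdec G ≤ n :=
  Nat.sInf_le ⟨c, h⟩

theorem exists_tdec {V : Type*} {G : SimpleGraph V}
    (h : ∃ n, ∃ c : Sym2 V → ℕ, IsTDEColoring G n c) :
    ∃ c : Sym2 V → ℕ, IsTDEColoring G (tdec G) c :=
  Nat.sInf_mem (s := {n | ∃ c : Sym2 V → ℕ, IsTDEColoring G n c}) h

theorem edgeAdj_map {V W : Type*} {φ : V → W} (hφ : Function.Injective φ) {e f : Sym2 V} :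
    edgeAdj (Sym2.map φ e) (Sym2.map φ f) ↔ edgeAdj e f := by
  constructor
  · rintro ⟨hne, v, hv, hv'⟩
    refine ⟨fun h => hne (h ▸ rfl), ?_⟩
    rw [Sym2.mem_map] at hv hv'
    obtain ⟨a, ha, rfl⟩ := hv
    obtain ⟨b, hb, hab⟩ := hv'
    exact ⟨a, ha, hφ hab ▸ hb⟩
  · rintro ⟨hne, v, hv, hv'⟩
    exact ⟨fun h => hne (Sym2.map.injective hφ h), φ v,
      Sym2.mem_map.2 ⟨v, hv, rfl⟩, Sym2.mem_map.2 ⟨v, hv', rfl⟩⟩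

/-- `e` is adjacent to every edge of some nonempty color class of `c`. -/
def Dominates {V : Type*} (G : SimpleGraph V) (c : Sym2 V → ℕ) (e : Sym2 V) : Prop :=
  ∃ i, (∃ f ∈ G.edgeSet, c f = i) ∧ ∀ f ∈ G.edgeSet, c f = i → edgeAdj e f

/-! ### Repairing a coloring with spare colors -/

/-- Recoloring: a proper coloring of a graph without isolated edges can be turned into a
TDE-coloring with the same palette if the edges that dominate no class have pairwise distinct
spare (unused) colors. A bad edge `e` is repaired by giving its spare color to a neighbor `f`; this
empties no color class, since `{f}` being a class would make `e` good. -/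
theorem exists_tde_of_spare {W : Type*} (H : SimpleGraph W) (n : ℕ)
    (hnb : ∀ e ∈ H.edgeSet, ∃ f ∈ H.edgeSet, edgeAdj e f) (s : Sym2 W → ℕ)
    (S : Finset (Sym2 W)) :
    ∀ c : Sym2 W → ℕ, (∀ e ∈ H.edgeSet, c e < n) →
      (∀ e ∈ H.edgeSet, ∀ f ∈ H.edgeSet, edgeAdj e f → c e ≠ c f) →
      (∀ e ∈ S, s e < n ∧ ∀ f ∈ H.edgeSet, c f ≠ s e) →
      (∀ e ∈ S, ∀ f ∈ S, s e = s f → e = f) →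
      (∀ e ∈ H.edgeSet, e ∉ S → Dominates H c e) →
      ∃ c', IsTDEColoring H n c' := by
  classical
  induction S using Finset.induction_on with
  | empty =>
    intro c h1 h2 _ _ h5
    exact ⟨c, h1, h2, fun e he => h5 e he (by simp)⟩
  | insert e S heS ih =>
    intro c h1 h2 h3 h4 h5
    by_cases hgood : e ∈ H.edgeSet → Dominates H c e
    · refine ih c h1 h2 (fun x hx => h3 x (by simp [hx]))
        (fun x hx y hy => h4 x (by simp [hx]) y (by simp [hy])) (fun x hx hxS => ?_)
      by_cases hxe : x = e
      · subst hxe; exact hgood hx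
      · exact h5 x hx (by simp [hxe, hxS])
    · push Not at hgood
      obtain ⟨he, hbad⟩ := hgood
      obtain ⟨f, hf, hef⟩ := hnb e he
      obtain ⟨hse, hse'⟩ := h3 e (by simp)
      have hup : ∀ g, g ≠ f → Function.update c f (s e) g = c g :=
        fun g hg => Function.update_of_ne hg _ _
      have hupf : Function.update c f (s e) f = s e := Function.update_self _ _ _
      refine ih (Function.update c f (s e)) ?_ ?_ ?_ ?_ ?_
      · intro g hg
        by_cases h : g = f
        · rw [h, hupf]; exact hse
        · rw [hup g h]; exact h1 g hg
      · intro g hg g' hg' hadj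
        by_cases h : g = f
        · have h' : g' ≠ f := fun h' => hadj.1 (h.trans h'.symm)
          rw [h, hupf, hup g' h']; exact (hse' g' hg').symm
        · by_cases h' : g' = f
          · rw [h', hupf, hup g h]; exact hse' g hg
          · rw [hup g h, hup g' h']; exact h2 g hg g' hg' hadj
      · intro x hx
        refine ⟨(h3 x (by simp [hx])).1, fun g hg => ?_⟩
        by_cases h : g = f
        · rw [h, hupf]
          intro hs
          exact heS (h4 e (by simp) x (by simp [hx]) hs ▸ hx)
        · rw [hup g h]; exact (h3 x (by simp [hx])).2 g hg
      · exact fun x hx y hy => h4 x (by simp [hx]) y (by simp [hy])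
      · intro x hx hxS
        by_cases hxe : x = e
        · subst hxe
          refine ⟨s x, ⟨f, hf, hupf⟩, fun g hg hgc => ?_⟩
          by_cases h : g = f
          · rw [h]; exact hef
          · rw [hup g h] at hgc; exact absurd hgc (hse' g hg)
        · obtain ⟨i, ⟨f0, hf0, hf0i⟩, hi⟩ := h5 x hx (by simp [hxe, hxS])
          by_cases hex : ∃ f1 ∈ H.edgeSet, c f1 = i ∧ f1 ≠ f
          · obtain ⟨f1, hf1, hf1i, hf1f⟩ := hex
            refine ⟨i, ⟨f1, hf1, by rw [hup f1 hf1f, hf1i]⟩, fun g hg hgc => ?_⟩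
            by_cases h : g = f
            · rw [h, hupf] at hgc
              exact absurd (hf1i.trans hgc.symm) (hse' f1 hf1)
            · rw [hup g h] at hgc; exact hi g hg hgc
          · -- the class of color `i` is `{f}`, so `e` dominates it
            push Not at hex
            exact absurd ⟨i, ⟨f0, hf0, hf0i⟩, fun g hg hgc => hex g hg hgc ▸ hef⟩ hbad

/-! ### Edges of the path graph -/

theorem path_edge {k : ℕ} {y : Sym2 (Fin (k + 1))} (hy : y ∈ (pathGraph (k + 1)).edgeSet) :
    ∃ a b : Fin (k + 1), (a : ℕ) + 1 = b ∧ y = s(a, b) := by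
  induction y using Sym2.ind with
  | _ a b =>
    rw [SimpleGraph.mem_edgeSet, pathGraph_adj] at hy
    rcases hy with h | h
    · exact ⟨a, b, h, rfl⟩
    · exact ⟨b, a, h, Sym2.eq_swap⟩

theorem path_edge_mem {k : ℕ} {a b : Fin (k + 1)} (h : (a : ℕ) + 1 = b) :
    s(a, b) ∈ (pathGraph (k + 1)).edgeSet := by
  rw [SimpleGraph.mem_edgeSet, pathGraph_adj]
  exact Or.inl h

theorem path_nb {k : ℕ} (hk : 2 ≤ k) : ∀ e ∈ (pathGraph (k + 1)).edgeSet,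
    ∃ f ∈ (pathGraph (k + 1)).edgeSet, edgeAdj e f := by
  intro e he
  obtain ⟨a, b, hab, rfl⟩ := path_edge he
  by_cases hb : (b : ℕ) = k
  · refine ⟨s(⟨a - 1, by omega⟩, a), path_edge_mem (by simp; omega), ?_, a, by simp, by simp⟩
    intro h
    simp only [Sym2.eq_iff, Fin.ext_iff] at h
    omega
  · refine ⟨s(b, ⟨b + 1, by omega⟩), path_edge_mem (by simp), ?_, b, by simp, by simp⟩
    intro h
    simp only [Sym2.eq_iff, Fin.ext_iff] at h
    omega

theorem path_tde {k : ℕ} (hk : 2 ≤ k) :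
    ∃ n, ∃ c : Sym2 (Fin (k + 1)) → ℕ, IsTDEColoring (pathGraph (k + 1)) n c := by
  classical
  refine ⟨_, fun e => (Fintype.equivFin (Sym2 (Fin (k + 1))) e : ℕ), fun e _ => Fin.isLt _, ?_, ?_⟩
  · intro e _ f _ h h'
    exact h.1 ((Fintype.equivFin _).injective (Fin.ext h'))
  · intro e he
    obtain ⟨f, hf, hef⟩ := path_nb hk e he
    refine ⟨_, ⟨f, hf, rfl⟩, fun g _ hg => ?_⟩
    rw [(Fintype.equivFin _).injective (Fin.ext hg)]
    exact hef

/-! ### The path of an edge in the subdivision -/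

section Embedding

variable {V : Type*} {G : SimpleGraph V} {k : ℕ}

/-- The vertex map of the path `P_{k+1}` onto the path of length `k` replacing the edge `e` in the
`k`-subdivision; vertex `0` goes to the first chosen endpoint of `e`, vertex `k` to the second. -/
noncomputable def edgePath (G : SimpleGraph V) (k : ℕ) (e : G.edgeSet) (j : Fin (k + 1)) :
    V ⊕ (G.edgeSet × Fin (k - 1)) :=
  if h0 : (j : ℕ) = 0 then .inl (Quot.out e.1).1
  else if hk : (j : ℕ) = k then .inl (Quot.out e.1).2
  else .inr (e, ⟨j - 1, by omega⟩)

theorem out_ne (e : G.edgeSet) : (Quot.out e.1).1 ≠ (Quot.out e.1).2 := by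
  intro h
  have h1 : s((Quot.out e.1).1, (Quot.out e.1).2) = e.1 := Quot.out_eq e.1
  have h2 := e.2
  rw [← h1, SimpleGraph.mem_edgeSet, h] at h2
  exact G.loopless.irrefl _ h2

theorem edgePath_injective (e : G.edgeSet) : Function.Injective (edgePath G k e) := by
  intro a b h
  have hne := out_ne e
  apply Fin.ext
  unfold edgePath at h
  split_ifs at h <;> simp_all
  omega

theorem edgePath_inr {e e' : G.edgeSet} {j : Fin (k + 1)} {i : Fin (k - 1)}
    (h : edgePath G k e j = .inr (e', i)) : e = e' := by
  unfold edgePath at h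
  split_ifs at h
  simp_all

theorem edgePath_of_ne (e : G.edgeSet) {j : Fin (k + 1)} (h0 : (j : ℕ) ≠ 0) (h : (j : ℕ) ≠ k) :
    ∃ i, edgePath G k e j = .inr (e, i) := by
  simp [edgePath, h0, h]

theorem edgePath_zero (e : G.edgeSet) {j : Fin (k + 1)} (h0 : (j : ℕ) = 0) :
    edgePath G k e j = .inl (Quot.out e.1).1 := by
  simp [edgePath, h0]

theorem edgePath_last (hk : 2 ≤ k) (e : G.edgeSet) {j : Fin (k + 1)} (h : (j : ℕ) = k) :
    edgePath G k e j = .inl (Quot.out e.1).2 := by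
  have : k ≠ 0 := by omega
  simp [edgePath, h, this]

theorem edgePath_mid (e : G.edgeSet) (i : Fin (k - 1)) {j : Fin (k + 1)} (h : (j : ℕ) = i + 1) :
    edgePath G k e j = .inr (e, i) := by
  have : (i : ℕ) + 1 ≠ k := by omega
  simp [edgePath, h, this]

theorem edgePath_mem (hk : 2 ≤ k) (e : G.edgeSet) {y : Sym2 (Fin (k + 1))}
    (hy : y ∈ (pathGraph (k + 1)).edgeSet) :
    Sym2.map (edgePath G k e) y ∈ (subdivision G k).edgeSet := by
  obtain ⟨a, b, hab, rfl⟩ := path_edge hy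
  rw [Sym2.map_mk, SimpleGraph.mem_edgeSet, subdivision, SimpleGraph.fromRel_adj]
  refine ⟨fun h => ?_, ?_⟩
  · have := edgePath_injective e h
    rw [this] at hab; omega
  by_cases ha : (a : ℕ) = 0
  · left
    rw [edgePath_zero e ha, edgePath_mid e ⟨0, by omega⟩ (by simp; omega)]
    simp
  by_cases hb : (b : ℕ) = k
  · right
    rw [edgePath_last hk e hb, edgePath_mid e ⟨k - 2, by omega⟩ (by simp; omega)]
    simp
  · left
    rw [edgePath_mid e ⟨a - 1, by omega⟩ (by simp; omega),
      edgePath_mid e ⟨a, by omega⟩ (by simp; omega)]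
    simp
    omega

theorem exists_edgePath (hk : 2 ≤ k) {x : Sym2 (V ⊕ (G.edgeSet × Fin (k - 1)))}
    (hx : x ∈ (subdivision G k).edgeSet) :
    ∃ (e : G.edgeSet) (y : Sym2 (Fin (k + 1))), y ∈ (pathGraph (k + 1)).edgeSet ∧
      Sym2.map (edgePath G k e) y = x := by
  have key : ∀ (v : V) (e : G.edgeSet) (i : Fin (k - 1)),
      (v = (Quot.out e.1).1 ∧ (i : ℕ) = 0) ∨ (v = (Quot.out e.1).2 ∧ (i : ℕ) = k - 2) →
      ∃ (e' : G.edgeSet) (y : Sym2 (Fin (k + 1))), y ∈ (pathGraph (k + 1)).edgeSet ∧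
        Sym2.map (edgePath G k e') y = s(.inl v, .inr (e, i)) := by
    rintro v e i (⟨rfl, hi⟩ | ⟨rfl, hi⟩)
    · refine ⟨e, s(⟨0, by omega⟩, ⟨1, by omega⟩), path_edge_mem (by simp), ?_⟩
      rw [Sym2.map_mk, edgePath_zero e (by simp), edgePath_mid e i (by simp [hi])]
    · refine ⟨e, s(⟨k - 1, by omega⟩, ⟨k, by omega⟩), path_edge_mem (by simp; omega), ?_⟩
      rw [Sym2.map_mk, edgePath_last hk e (j := ⟨k, by omega⟩) rfl,
        edgePath_mid e i (j := ⟨k - 1, by omega⟩) (by simp only [hi]; omega)]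
      exact Sym2.eq_swap
  have key2 : ∀ (e : G.edgeSet) (i j : Fin (k - 1)), (j : ℕ) = i + 1 →
      ∃ (e' : G.edgeSet) (y : Sym2 (Fin (k + 1))), y ∈ (pathGraph (k + 1)).edgeSet ∧
        Sym2.map (edgePath G k e') y = s(.inr (e, i), .inr (e, j)) := by
    intro e i j hij
    refine ⟨e, s(⟨i + 1, by omega⟩, ⟨j + 1, by omega⟩), path_edge_mem (by simp; omega), ?_⟩
    rw [Sym2.map_mk, edgePath_mid e i (by simp), edgePath_mid e j (by simp)]
  induction x using Sym2.ind with
  | _ a b =>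
    rw [SimpleGraph.mem_edgeSet, subdivision, SimpleGraph.fromRel_adj] at hx
    obtain ⟨hne, h⟩ := hx
    rcases a with v | ⟨e, i⟩ <;> rcases b with w | ⟨f, j⟩
    · simp only at h; omega
    · simp only [or_false] at h
      exact key v f j h
    · simp only [false_or] at h
      rw [Sym2.eq_swap]
      exact key w e i h
    · rcases h with ⟨rfl, h⟩ | ⟨rfl, h⟩
      · exact key2 e i j h
      · rw [Sym2.eq_swap]
        exact key2 f j i h

/-- Every edge of the subdivision lies on the path of at most one edge of `G`: it has an internal
vertex as an endpoint because `2 ≤ k`. -/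
theorem edgePath_unique (hk : 2 ≤ k) {e e' : G.edgeSet} {y y' : Sym2 (Fin (k + 1))}
    (hy : y ∈ (pathGraph (k + 1)).edgeSet)
    (h : Sym2.map (edgePath G k e) y = Sym2.map (edgePath G k e') y') : e = e' ∧ y = y' := by
  have he : e = e' := by
    obtain ⟨a, b, hab, rfl⟩ := path_edge hy
    obtain ⟨v, hv, hv0, hvk⟩ : ∃ v ∈ s(a, b), (v : ℕ) ≠ 0 ∧ (v : ℕ) ≠ k := by
      by_cases ha : (a : ℕ) = 0
      · exact ⟨b, by simp, by omega, by omega⟩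
      · exact ⟨a, by simp, by omega, by omega⟩
    obtain ⟨i, hi⟩ := edgePath_of_ne e hv0 hvk
    have hmem : edgePath G k e v ∈ Sym2.map (edgePath G k e') y' :=
      h ▸ Sym2.mem_map.2 ⟨v, hv, rfl⟩
    obtain ⟨w, _, hw⟩ := Sym2.mem_map.1 hmem
    exact (edgePath_inr (hw.trans hi)).symm
  subst he
  exact ⟨rfl, Sym2.map.injective (edgePath_injective e) h⟩

/-- A vertex of the path of `e` at which an edge outside that path is attached is an end vertex. -/
theorem end_of_outside (hk : 2 ≤ k) {e : G.edgeSet} {f : Sym2 (V ⊕ (G.edgeSet × Fin (k - 1)))}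
    (hf : f ∈ (subdivision G k).edgeSet)
    (hout : ∀ y ∈ (pathGraph (k + 1)).edgeSet, Sym2.map (edgePath G k e) y ≠ f)
    {v : Fin (k + 1)} (hv : edgePath G k e v ∈ f) : (v : ℕ) = 0 ∨ (v : ℕ) = k := by
  by_contra! hcon
  obtain ⟨i, hi⟩ := edgePath_of_ne e hcon.1 hcon.2
  obtain ⟨e', y, hy, rfl⟩ := exists_edgePath hk hf
  obtain ⟨w, _, hw⟩ := Sym2.mem_map.1 hv
  obtain rfl := edgePath_inr (hw.trans hi)
  exact hout y hy rfl

end Embedding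

/-! ### The two bounds -/

/-- Restricting a TDE-coloring of the subdivision to the path of one edge `e` and recoloring gives
a TDE-coloring of `P_{k+1}` with the same palette. Only the two end edges of the path can lose
their dominated class; such a class then lies outside the path, so its color is spare there. The
two spare colors are distinct, as a common edge would join the two ends of `e`, which are not
adjacent in the subdivision. -/
theorem path_tde_of_subdivision {V : Type*} {G : SimpleGraph V} {k : ℕ} (hk : 2 ≤ k)
    (e : G.edgeSet) {n : ℕ} {c : Sym2 (V ⊕ (G.edgeSet × Fin (k - 1))) → ℕ}
    (hc : IsTDEColoring (subdivision G k) n c) :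
    ∃ c', IsTDEColoring (pathGraph (k + 1)) n c' := by
  classical
  obtain ⟨h1, h2, h3⟩ := hc
  set φ := edgePath G k e
  have hφ : Function.Injective φ := edgePath_injective e
  let c0 : Sym2 (Fin (k + 1)) → ℕ := fun y => c (Sym2.map φ y)
  let S : Finset (Sym2 (Fin (k + 1))) := Finset.univ.filter
    fun y => y ∈ (pathGraph (k + 1)).edgeSet ∧ ¬ Dominates (pathGraph (k + 1)) c0 y
  -- for bad `y`, the witness `i` is the class dominated by `y` in the subdivision
  have hS : ∀ y : Sym2 (Fin (k + 1)), ∃ i, y ∈ S → (∀ f ∈ (subdivision G k).edgeSet, c f = i →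
      edgeAdj (Sym2.map φ y) f) ∧ (∃ f ∈ (subdivision G k).edgeSet, c f = i) ∧
      ∀ z ∈ (pathGraph (k + 1)).edgeSet, c0 z ≠ i := by
    intro y
    by_cases hy : y ∈ S
    · obtain ⟨hyE, hyD⟩ := (Finset.mem_filter.1 hy).2
      obtain ⟨i, hne, hi⟩ := h3 _ (edgePath_mem hk e hyE)
      refine ⟨i, fun _ => ⟨hi, hne, fun z hz hzi => hyD ⟨i, ⟨z, hz, hzi⟩, ?_⟩⟩⟩
      intro w hw hwi
      exact (edgeAdj_map hφ).1 (hi _ (edgePath_mem hk e hw) hwi)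
    · exact ⟨0, fun h => absurd h hy⟩
  choose s hs using hS
  refine exists_tde_of_spare (pathGraph (k + 1)) n (path_nb hk) s S c0 ?_ ?_ ?_ ?_ ?_
  · exact fun y hy => h1 _ (edgePath_mem hk e hy)
  · exact fun y hy z hz hyz =>
      h2 _ (edgePath_mem hk e hy) _ (edgePath_mem hk e hz) ((edgeAdj_map hφ).2 hyz)
  · intro y hy
    obtain ⟨_, ⟨f, hf, hfs⟩, hz⟩ := hs y hy
    exact ⟨hfs ▸ h1 f hf, hz⟩
  · intro y hy z hz hyz
    obtain ⟨hyd, ⟨f, hf, hfs⟩, hyout⟩ := hs y hy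
    have hfy := hyd f hf hfs
    have hfz := (hs z hz).1 f hf (hfs.trans hyz)
    have hyE := (Finset.mem_filter.1 hy).2.1
    have hzE := (Finset.mem_filter.1 hz).2.1
    obtain ⟨_, _, hv, hvf⟩ := hfy
    obtain ⟨_, _, hw, hwf⟩ := hfz
    obtain ⟨v, hvy, rfl⟩ := Sym2.mem_map.1 hv
    obtain ⟨w, hwz, rfl⟩ := Sym2.mem_map.1 hw
    have hout : ∀ y ∈ (pathGraph (k + 1)).edgeSet, Sym2.map φ y ≠ f :=
      fun x hx hxf => hyout x hx (hfs ▸ hxf ▸ rfl)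
    have hv0 := end_of_outside hk hf hout hvf
    have hw0 := end_of_outside hk hf hout hwf
    by_cases hvw : v = w
    · -- an end vertex lies on only one edge of the path
      subst hvw
      obtain ⟨a, b, hab, rfl⟩ := path_edge hyE
      obtain ⟨a', b', hab', rfl⟩ := path_edge hzE
      simp only [Sym2.mem_iff, Fin.ext_iff] at hvy hwz
      simp only [Sym2.eq_iff, Fin.ext_iff]
      omega
    · exfalso
      have hfe : f = s(φ v, φ w) := ((Sym2.mem_and_mem_iff (hφ.ne hvw)).1 ⟨hvf, hwf⟩)
      have hinl : ∀ u : Fin (k + 1), (u : ℕ) = 0 ∨ (u : ℕ) = k → ∃ x, φ u = .inl x := by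
        rintro u (h | h)
        · exact ⟨_, edgePath_zero e h⟩
        · exact ⟨_, edgePath_last hk e h⟩
      obtain ⟨p, hp⟩ := hinl v hv0
      obtain ⟨q, hq⟩ := hinl w hw0
      rw [hfe, hp, hq, SimpleGraph.mem_edgeSet, subdivision, SimpleGraph.fromRel_adj] at hf
      have := hf.2
      simp only at this
      omega
  · intro y hy hyS
    by_contra hD
    exact hyS (Finset.mem_filter.2 ⟨Finset.mem_univ _, hy, hD⟩)

/-- Coloring the paths of the `m` edges of `G` with `m` disjoint copies of one palette of size `n`
gives a TDE-coloring of the subdivision. -/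
theorem subdivision_tde {V : Type*} [Finite V] {G : SimpleGraph V} {k : ℕ} (hk : 2 ≤ k)
    {n : ℕ} {c : Sym2 (Fin (k + 1)) → ℕ} (hc : IsTDEColoring (pathGraph (k + 1)) n c) :
    ∃ c', IsTDEColoring (subdivision G k) (G.edgeSet.ncard * n) c' := by
  classical
  obtain ⟨h1, h2, h3⟩ := hc
  have : Finite G.edgeSet := Set.toFinite _
  let idx : G.edgeSet ≃ Fin (G.edgeSet.ncard) := Finite.equivFinOfCardEq rfl
  let g : G.edgeSet × (pathGraph (k + 1)).edgeSet → Sym2 (V ⊕ (G.edgeSet × Fin (k - 1))) :=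
    fun p => Sym2.map (edgePath G k p.1) p.2.1
  have hg : Function.Injective g := by
    rintro ⟨e, y, hy⟩ ⟨e', y', hy'⟩ h
    obtain ⟨rfl, rfl⟩ := edgePath_unique hk hy h
    rfl
  let c' := Function.extend g (fun p => (idx p.1 : ℕ) * n + c p.2.1) 0
  have hc' : ∀ (e : G.edgeSet) (y : Sym2 (Fin (k + 1))), y ∈ (pathGraph (k + 1)).edgeSet →
      c' (Sym2.map (edgePath G k e) y) = (idx e : ℕ) * n + c y :=
    fun e y hy => hg.extend_apply (fun p => (idx p.1 : ℕ) * n + c p.2.1) 0 (e, ⟨y, hy⟩)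
  have hdec : ∀ (e e' : G.edgeSet) (i j : ℕ), i < n → j < n →
      (idx e : ℕ) * n + i = (idx e' : ℕ) * n + j → e = e' ∧ i = j := by
    intro e e' i j hi hj h
    have hn : 0 < n := by omega
    have hm : i = j := by
      have := congrArg (· % n) h
      simpa [Nat.mul_add_mod_self_right, Nat.mod_eq_of_lt hi, Nat.mod_eq_of_lt hj] using this
    subst hm
    refine ⟨idx.injective (Fin.ext ?_), rfl⟩
    exact Nat.eq_of_mul_eq_mul_right hn (Nat.add_right_cancel h)
  refine ⟨c', ?_, ?_, ?_⟩
  · intro x hx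
    obtain ⟨e, y, hy, rfl⟩ := exists_edgePath hk hx
    rw [hc' e y hy]
    calc (idx e : ℕ) * n + c y < (idx e : ℕ) * n + n := by have := h1 y hy; omega
      _ = ((idx e : ℕ) + 1) * n := by ring
      _ ≤ _ := Nat.mul_le_mul_right _ (idx e).isLt
  · intro x hx x' hx' hadj heq
    obtain ⟨e, y, hy, rfl⟩ := exists_edgePath hk hx
    obtain ⟨e', y', hy', rfl⟩ := exists_edgePath hk hx'
    rw [hc' e y hy, hc' e' y' hy'] at heq
    obtain ⟨rfl, hcol⟩ := hdec _ _ _ _ (h1 y hy) (h1 y' hy') heq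
    exact h2 y hy y' hy' ((edgeAdj_map (edgePath_injective e)).1 hadj) hcol
  · intro x hx
    obtain ⟨e, y, hy, rfl⟩ := exists_edgePath hk hx
    obtain ⟨i, ⟨f, hf, rfl⟩, hi⟩ := h3 y hy
    refine ⟨_, ⟨Sym2.map (edgePath G k e) f, edgePath_mem hk e hf, hc' e f hf⟩, ?_⟩
    intro x' hx' heq
    obtain ⟨e', y', hy', rfl⟩ := exists_edgePath hk hx'
    rw [hc' e' y' hy'] at heq
    obtain ⟨rfl, hcol⟩ := hdec _ _ _ _ (h1 y' hy') (h1 f hf) heq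
    exact (edgeAdj_map (edgePath_injective _)).2 (hi y' hy' hcol)

/-- If G is connected with m ≥ 1 edges and k ≥ 2, then
χ'ᵗ_d(P_{k+1}) ≤ χ'ᵗ_d(G^{1/k}) ≤ m · χ'ᵗ_d(P_{k+1}). -/
theorem tdec_subdivision_bounds {V : Type*} [Fintype V] (G : SimpleGraph V)
    (hconn : G.Connected) (hm : 1 ≤ G.edgeSet.ncard) (k : ℕ) (hk : 2 ≤ k) :
    tdec (pathGraph (k + 1)) ≤ tdec (subdivision G k) ∧
    tdec (subdivision G k) ≤ G.edgeSet.ncard * tdec (pathGraph (k + 1)) := by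
  obtain ⟨c, hc⟩ := exists_tdec (path_tde hk)
  have hsub := subdivision_tde (G := G) hk hc
  obtain ⟨e, he⟩ := Set.nonempty_of_ncard_ne_zero (s := G.edgeSet) (by omega)
  obtain ⟨c', hc'⟩ := exists_tdec ⟨_, hsub⟩
  obtain ⟨c'', hc''⟩ := path_tde_of_subdivision hk ⟨e, he⟩ hc'
  exact ⟨tdec_le hc'', hsub.elim fun _ h => tdec_le h⟩
end
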